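/- Let (X, 𝒳) be a stable measurable space, let μ₁ and μ₂ be finite stable measures on (X, 𝒳), and set μ₃ := μ₂ − μ₁ (an L⁰-valued stable set function on 𝒳). Then there exists X₀|A₀ ∈ 𝒳 such that (i) μ₃(X) ≤ μ₃(X₀|A₀) a.s., and (ii) 0 ≤ μ₃(V|A) a.s. for all V|A ∈ 𝒳 with V|A ⊑ X₀|A₀. -/

import Mathlib

/-!
Common framework for conditional set theory and conditional measure theory
in the sense of Drapeau–Jamneshan–Karliczek–Kupper, specialized to the
measure algebra associated to a probability space `(Ω, F, P)`.

Functions on `Ω` are identified when they agree `P`-a.s., and measurable sets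
are identified when their symmetric difference is a null set.  Conditional
subsets of a stable set `X` are represented by raw pairs `(V, A)` consisting of
a set of functions and a (measurable) base set; all notions are formulated with
respect to the almost-sure identifications via the relations `cle` and `ceq`.
-/

open MeasureTheory Filter Set Topology
open scoped ENNReal

noncomputable section

namespace CondMT

variable {Ω E F' : Type*}

/-- A countable partition of `Ω` into measurable sets (modulo `P`-null sets). -/
structure Partition {Ω : Type*} (mΩ : MeasurableSpace Ω) (P : @Measure Ω mΩ) where
  part : ℕ → Set Ω
  meas : ∀ k, MeasurableSet[mΩ] (part k)
  disj : ∀ i j, i ≠ j → P (part i ∩ part j) = 0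
  cover : P ((⋃ k, part k)ᶜ) = 0

variable {mΩ : MeasurableSpace Ω}

open Classical in
/-- The concatenation `∑ x_k|A_k` of a sequence of functions along a partition:
the (a.s. unique) function equal to `x_k` on `A_k` for every `k`. -/
def Partition.concat {P : @Measure Ω mΩ} (A : Partition mΩ P) (x : ℕ → Ω → E) : Ω → E :=
  fun ω => if h : ∃ k, ω ∈ A.part k then x (Nat.find h) ω else x 0 ω

/-- A stable set of functions on `Ω`: nonempty, closed under a.s. modification and
closed under countable concatenations along partitions. -/
def Stable (P : @Measure Ω mΩ) (X : Set (Ω → E)) : Prop :=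
  X.Nonempty ∧ (∀ x ∈ X, ∀ y, x =ᵐ[P] y → y ∈ X) ∧
    ∀ (A : Partition mΩ P) (x : ℕ → Ω → E), (∀ k, x k ∈ X) → A.concat x ∈ X

/-- Raw data of a conditional subset `V|A`: the carrier `V` and the base set `A`. -/
abbrev CondRaw (Ω E : Type*) := Set (Ω → E) × Set Ω

/-- `S` represents a conditional subset of the stable set `X`: the carrier is a
stable subset of `X` and the base is measurable. -/
def IsCond (P : @Measure Ω mΩ) (X : Set (Ω → E)) (S : CondRaw Ω E) : Prop :=
  Stable P S.1 ∧ S.1 ⊆ X ∧ MeasurableSet[mΩ] S.2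

/-- Conditional inclusion `V|A ⊑ W|B`: `A ⊆ B` a.s., and every `x|A`, `x ∈ V`,
coincides a.s. on `A` with some `y|A`, `y ∈ W`. -/
def cle (P : @Measure Ω mΩ) (S T : CondRaw Ω E) : Prop :=
  P (S.2 \ T.2) = 0 ∧ ∀ x ∈ S.1, ∃ y ∈ T.1, ∀ᵐ ω ∂P, ω ∈ S.2 → x ω = y ω

/-- Identification of conditional subsets (equality in the conditional power set). -/
def ceq (P : @Measure Ω mΩ) (S T : CondRaw Ω E) : Prop := cle P S T ∧ cle P T S

/-- `x|C ∈ V|C`: the restriction of `x` to `C` agrees a.s. on `C` with an element of `V`. -/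
def memOn (P : @Measure Ω mΩ) (C : Set Ω) (x : Ω → E) (V : Set (Ω → E)) : Prop :=
  ∃ y ∈ V, ∀ᵐ ω ∂P, ω ∈ C → x ω = y ω

/-- `∑ V_k|A_k`, the set of concatenations of sequences taken from the `V_k`. -/
def concatSet (P : @Measure Ω mΩ) (A : Partition mΩ P) (V : ℕ → Set (Ω → E)) :
    Set (Ω → E) :=
  {f | ∃ x : ℕ → Ω → E, (∀ k, x k ∈ V k) ∧ f =ᵐ[P] A.concat x}

/-- Countable concatenation `∑ (V_k|B_k)|A_k := (∑ V_k|A_k)|⋃ (A_k ∩ B_k)` in the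
conditional power set. -/
def condConcat (P : @Measure Ω mΩ) (A : Partition mΩ P) (S : ℕ → CondRaw Ω E) :
    CondRaw Ω E :=
  (concatSet P A fun k => (S k).1, ⋃ k, A.part k ∩ (S k).2)

/-- Restriction `(V|A)|B := V|(A ∩ B)`. -/
def crestrict (S : CondRaw Ω E) (B : Set Ω) : CondRaw Ω E := (S.1, S.2 ∩ B)

/-- The degenerate conditional subset `X|∅ = {∗}`, the least element of `P(X)`. -/
def cbot (X : Set (Ω → E)) : CondRaw Ω E := (X, (∅ : Set Ω))

/-- The greatest element `X = X|Ω` of `P(X)`. -/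
def ctop (X : Set (Ω → E)) : CondRaw Ω E := (X, (univ : Set Ω))

/-- `a` is a supremum (conditional union) of the family `s` in `(P(X), ⊑)`. -/
def IsSupOf (P : @Measure Ω mΩ) (X : Set (Ω → E)) (s : Set (CondRaw Ω E))
    (a : CondRaw Ω E) : Prop :=
  IsCond P X a ∧ (∀ b ∈ s, cle P b a) ∧
    ∀ c, IsCond P X c → (∀ b ∈ s, cle P b c) → cle P a c

/-- `a` is an infimum (conditional intersection) of the family `s` in `(P(X), ⊑)`. -/
def IsInfOf (P : @Measure Ω mΩ) (X : Set (Ω → E)) (s : Set (CondRaw Ω E))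
    (a : CondRaw Ω E) : Prop :=
  IsCond P X a ∧ (∀ b ∈ s, cle P a b) ∧
    ∀ c, IsCond P X c → (∀ b ∈ s, cle P c b) → cle P c a

open Classical in
/-- The conditional union (supremum) of a family of conditional subsets. -/
def cSup (P : @Measure Ω mΩ) (X : Set (Ω → E)) (s : Set (CondRaw Ω E)) : CondRaw Ω E :=
  if h : ∃ a, IsSupOf P X s a then h.choose else ctop X

open Classical in
/-- The conditional intersection (infimum) of a family of conditional subsets. -/
def cInf (P : @Measure Ω mΩ) (X : Set (Ω → E)) (s : Set (CondRaw Ω E)) : CondRaw Ω E :=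
  if h : ∃ a, IsInfOf P X s a then h.choose else ctop X

/-- Binary conditional union. -/
def cSup₂ (P : @Measure Ω mΩ) (X : Set (Ω → E)) (a b : CondRaw Ω E) : CondRaw Ω E :=
  cSup P X {a, b}

/-- Binary conditional intersection. -/
def cInf₂ (P : @Measure Ω mΩ) (X : Set (Ω → E)) (a b : CondRaw Ω E) : CondRaw Ω E :=
  cInf P X {a, b}

/-- Conditional union of an indexed family. -/
def cSupFam (P : @Measure Ω mΩ) (X : Set (Ω → E)) {ι : Sort*}
    (S : ι → CondRaw Ω E) : CondRaw Ω E :=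
  cSup P X (range S)

/-- Conditional intersection of an indexed family. -/
def cInfFam (P : @Measure Ω mΩ) (X : Set (Ω → E)) {ι : Sort*}
    (S : ι → CondRaw Ω E) : CondRaw Ω E :=
  cInf P X (range S)

/-- Disjointness of conditional subsets: `V|A ⊓ W|B = {∗}`. -/
def cdisjoint (P : @Measure Ω mΩ) (X : Set (Ω → E)) (a b : CondRaw Ω E) : Prop :=
  ceq P (cInf₂ P X a b) (cbot X)

/-- The conditional complement `(V|A)^⊏ := ⊔ {W|B : W|B ⊓ V|A = {∗}}`. -/
def ccompl (P : @Measure Ω mΩ) (X : Set (Ω → E)) (a : CondRaw Ω E) : CondRaw Ω E :=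
  cSup P X {b | IsCond P X b ∧ cdisjoint P X b a}

open Classical in
/-- The largest measurable set (mod null sets) satisfying a property `Φ`,
obtained by an exhaustion argument; junk value `∅` if there is none. -/
def largestSet (P : @Measure Ω mΩ) (Φ : Set Ω → Prop) : Set Ω :=
  if h : ∃ C, MeasurableSet[mΩ] C ∧ Φ C ∧
      ∀ C', MeasurableSet[mΩ] C' → Φ C' → P (C' \ C) = 0
  then h.choose else ∅

open Classical in
/-- The smallest measurable set (mod null sets) satisfying a property `Φ`. -/
def smallestSet (P : @Measure Ω mΩ) (Φ : Set Ω → Prop) : Set Ω :=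
  if h : ∃ C, MeasurableSet[mΩ] C ∧ Φ C ∧
      ∀ C', MeasurableSet[mΩ] C' → Φ C' → P (C \ C') = 0
  then h.choose else univ

/-- Essential infimum `inf_i A_i` of a family of measurable sets in the measure algebra. -/
def essInfFam (P : @Measure Ω mΩ) {ι : Sort*} (A : ι → Set Ω) : Set Ω :=
  largestSet P fun C => ∀ i, P (C \ A i) = 0

/-- Essential supremum `sup_i A_i` of a family of measurable sets in the measure algebra. -/
def essSupFam (P : @Measure Ω mΩ) {ι : Sort*} (A : ι → Set Ω) : Set Ω :=
  smallestSet P fun C => ∀ i, P (A i \ C) = 0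

/-- A stable collection: a nonempty, `ceq`-saturated family of conditional subsets of `X`
closed under countable concatenations. -/
def IsStableColl (P : @Measure Ω mΩ) (X : Set (Ω → E)) (𝒞 : Set (CondRaw Ω E)) : Prop :=
  𝒞.Nonempty ∧ (∀ S ∈ 𝒞, IsCond P X S) ∧
    (∀ S ∈ 𝒞, ∀ T, IsCond P X T → ceq P S T → T ∈ 𝒞) ∧
    ∀ (A : Partition mΩ P) (S : ℕ → CondRaw Ω E), (∀ k, S k ∈ 𝒞) → condConcat P A S ∈ 𝒞

/-- A stable σ-algebra on `X`. -/
def IsStableSigma (P : @Measure Ω mΩ) (X : Set (Ω → E)) (𝒳 : Set (CondRaw Ω E)) : Prop :=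
  IsStableColl P X 𝒳 ∧ ctop X ∈ 𝒳 ∧ (∀ S ∈ 𝒳, ccompl P X S ∈ 𝒳) ∧
    ∀ S : ℕ → CondRaw Ω E, (∀ k, S k ∈ 𝒳) → cSupFam P X S ∈ 𝒳

/-- A stable Dynkin system on `X`. -/
def IsStableDynkin (P : @Measure Ω mΩ) (X : Set (Ω → E)) (𝒟 : Set (CondRaw Ω E)) : Prop :=
  IsStableColl P X 𝒟 ∧ ctop X ∈ 𝒟 ∧ (∀ S ∈ 𝒟, ccompl P X S ∈ 𝒟) ∧
    ∀ S : ℕ → CondRaw Ω E, (∀ k, S k ∈ 𝒟) →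
      (∀ i j, i ≠ j → cdisjoint P X (S i) (S j)) → cSupFam P X S ∈ 𝒟

/-- A stable ring on `X`. -/
def IsStableRing (P : @Measure Ω mΩ) (X : Set (Ω → E)) (𝒳 : Set (CondRaw Ω E)) : Prop :=
  IsStableColl P X 𝒳 ∧
    ∀ S ∈ 𝒳, ∀ T ∈ 𝒳, cInf₂ P X S (ccompl P X T) ∈ 𝒳 ∧ cSup₂ P X S T ∈ 𝒳

/-- The stable σ-algebra generated by a collection `ℰ`. -/
def sigmaGen (P : @Measure Ω mΩ) (X : Set (Ω → E)) (ℰ : Set (CondRaw Ω E)) :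
    Set (CondRaw Ω E) :=
  ⋂₀ {𝒳 | IsStableSigma P X 𝒳 ∧ ℰ ⊆ 𝒳}

/-- The stable Dynkin system generated by a collection `ℰ`. -/
def dynkinGen (P : @Measure Ω mΩ) (X : Set (Ω → E)) (ℰ : Set (CondRaw Ω E)) :
    Set (CondRaw Ω E) :=
  ⋂₀ {𝒟 | IsStableDynkin P X 𝒟 ∧ ℰ ⊆ 𝒟}

/-! ### Stable set functions and stable measures -/

/-- A stable set function `μ : 𝒞 → L̄⁰₊` (represented by measurable representatives,
well defined modulo identification, and commuting with countable concatenations). -/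
def IsStableSetFun (P : @Measure Ω mΩ) (𝒞 : Set (CondRaw Ω E))
    (μ : CondRaw Ω E → Ω → ℝ≥0∞) : Prop :=
  (∀ S ∈ 𝒞, Measurable[mΩ] (μ S)) ∧
    (∀ S ∈ 𝒞, ∀ T ∈ 𝒞, ceq P S T → μ S =ᵐ[P] μ T) ∧
    ∀ (A : Partition mΩ P) (S : ℕ → CondRaw Ω E), (∀ k, S k ∈ 𝒞) →
      μ (condConcat P A S) =ᵐ[P] A.concat fun k => μ (S k)

/-- Property (M1): `μ(V|A) = μ(V|A)|A + 0|Aᶜ`. -/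
def M1 (P : @Measure Ω mΩ) (𝒞 : Set (CondRaw Ω E)) (μ : CondRaw Ω E → Ω → ℝ≥0∞) : Prop :=
  ∀ S ∈ 𝒞, μ S =ᵐ[P] S.2.indicator (μ S)

/-- Property (M2): countable additivity on pairwise disjoint sequences whose
conditional union belongs to the domain. -/
def M2 (P : @Measure Ω mΩ) (X : Set (Ω → E)) (𝒳 : Set (CondRaw Ω E))
    (μ : CondRaw Ω E → Ω → ℝ≥0∞) : Prop :=
  ∀ S : ℕ → CondRaw Ω E, (∀ k, S k ∈ 𝒳) →
    (∀ i j, i ≠ j → cdisjoint P X (S i) (S j)) → cSupFam P X S ∈ 𝒳 →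
    μ (cSupFam P X S) =ᵐ[P] fun ω => ∑' k, μ (S k) ω

/-- Finite additivity: (M2) for finite pairwise disjoint families. -/
def FinAdd (P : @Measure Ω mΩ) (X : Set (Ω → E)) (𝒳 : Set (CondRaw Ω E))
    (μ : CondRaw Ω E → Ω → ℝ≥0∞) : Prop :=
  ∀ (n : ℕ) (S : Fin n → CondRaw Ω E), (∀ k, S k ∈ 𝒳) →
    (∀ i j, i ≠ j → cdisjoint P X (S i) (S j)) → cSupFam P X S ∈ 𝒳 →
    μ (cSupFam P X S) =ᵐ[P] fun ω => ∑ k, μ (S k) ω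

/-- A stable measure (or stable pre-measure, when the domain is merely a stable
ring): a stable set function satisfying (M1) and (M2). -/
def IsStableMeasureOn (P : @Measure Ω mΩ) (X : Set (Ω → E)) (𝒳 : Set (CondRaw Ω E))
    (μ : CondRaw Ω E → Ω → ℝ≥0∞) : Prop :=
  IsStableSetFun P 𝒳 μ ∧ M1 P 𝒳 μ ∧ M2 P X 𝒳 μ

/-- A finite stable measure. -/
def IsFiniteStableMeasureOn (P : @Measure Ω mΩ) (X : Set (Ω → E))
    (𝒳 : Set (CondRaw Ω E)) (μ : CondRaw Ω E → Ω → ℝ≥0∞) : Prop :=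
  IsStableMeasureOn P X 𝒳 μ ∧ ∀ᵐ ω ∂P, μ (ctop X) ω < ∞

/-- A stable probability measure. -/
def IsStableProbOn (P : @Measure Ω mΩ) (X : Set (Ω → E)) (𝒳 : Set (CondRaw Ω E))
    (μ : CondRaw Ω E → Ω → ℝ≥0∞) : Prop :=
  IsStableMeasureOn P X 𝒳 μ ∧ μ (ctop X) =ᵐ[P] fun _ => (1 : ℝ≥0∞)

/-- A stable outer measure on the conditional power set of `X`. -/
def IsStableOuter (P : @Measure Ω mΩ) (X : Set (Ω → E))
    (μ : CondRaw Ω E → Ω → ℝ≥0∞) : Prop :=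
  (∀ S, IsCond P X S → Measurable[mΩ] (μ S)) ∧
    (∀ S T, IsCond P X S → IsCond P X T → ceq P S T → μ S =ᵐ[P] μ T) ∧
    (∀ (A : Partition mΩ P) (S : ℕ → CondRaw Ω E), (∀ k, IsCond P X (S k)) →
      μ (condConcat P A S) =ᵐ[P] A.concat fun k => μ (S k)) ∧
    (∀ S, IsCond P X S → ∀ B, MeasurableSet[mΩ] B →
      μ (crestrict S B) =ᵐ[P] B.indicator (μ S)) ∧
    (∀ S T, IsCond P X S → IsCond P X T → cle P S T → ∀ᵐ ω ∂P, μ S ω ≤ μ T ω) ∧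
    ∀ S : ℕ → CondRaw Ω E, (∀ k, IsCond P X (S k)) →
      ∀ᵐ ω ∂P, μ (cSupFam P X S) ω ≤ ∑' k, μ (S k) ω

/-- Stable Carathéodory measurability with respect to a stable outer measure. -/
def CaraMeasurable (P : @Measure Ω mΩ) (X : Set (Ω → E))
    (μ : CondRaw Ω E → Ω → ℝ≥0∞) (S : CondRaw Ω E) : Prop :=
  ∀ T, IsCond P X T →
    (fun ω => μ (cInf₂ P X T S) ω + μ (cInf₂ P X T (ccompl P X S)) ω) =ᵐ[P] μ T

/-! ### Stable functions, the stable Borel σ-algebra on `L⁰`, and the integral -/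

/-- The stable set `L⁰_m(E)` of all (classes of) measurable functions `Ω → E`. -/
def l0m (P : @Measure Ω mΩ) (E : Type*) [MeasurableSpace E] : Set (Ω → E) :=
  {x | AEMeasurable x P}

/-- A stable function between stable sets of functions. -/
def StableFun (P : @Measure Ω mΩ) (X : Set (Ω → E)) (Y : Set (Ω → F'))
    (f : (Ω → E) → Ω → F') : Prop :=
  (∀ x ∈ X, f x ∈ Y) ∧ (∀ x ∈ X, ∀ y ∈ X, x =ᵐ[P] y → f x =ᵐ[P] f y) ∧
    ∀ (A : Partition mΩ P) (x : ℕ → Ω → E), (∀ k, x k ∈ X) →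
      f (A.concat x) =ᵐ[P] A.concat fun k => f (x k)

/-- The conditional preimage `f⁻¹(W|A)`. -/
def cPreimage (P : @Measure Ω mΩ) (X : Set (Ω → E)) (f : (Ω → E) → Ω → F')
    (W : CondRaw Ω F') : CondRaw Ω E :=
  ({x ∈ X | memOn P (largestSet P fun C => P (C \ W.2) = 0 ∧ ∃ x ∈ X, memOn P C (f x) W.1)
      (f x) W.1},
    largestSet P fun C => P (C \ W.2) = 0 ∧ ∃ x ∈ X, memOn P C (f x) W.1)

/-- The stable Borel σ-algebra `B(L⁰)` on `L⁰`, generated by the stable open balls. -/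
def borelL0 (P : @Measure Ω mΩ) : Set (CondRaw Ω ℝ) :=
  sigmaGen P (l0m P ℝ)
    {S | ∃ r ε : Ω → ℝ, AEMeasurable r P ∧ AEMeasurable ε P ∧ (∀ᵐ ω ∂P, 0 < ε ω) ∧
      ceq P S ({s | AEMeasurable s P ∧ ∀ᵐ ω ∂P, |s ω - r ω| < ε ω}, univ)}

/-- A stably measurable function `f : X → L⁰` with respect to a stable σ-algebra `𝒳`. -/
def StablyMeasurable (P : @Measure Ω mΩ) (X : Set (Ω → E)) (𝒳 : Set (CondRaw Ω E))
    (f : (Ω → E) → Ω → ℝ) : Prop :=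
  StableFun P X (l0m P ℝ) f ∧ ∀ W ∈ borelL0 P, cPreimage P X f W ∈ 𝒳

/-- The base set `A_x` of the stable indicator function of `S = V|A` at `x`. -/
def indBase (P : @Measure Ω mΩ) (S : CondRaw Ω E) (x : Ω → E) : Set Ω :=
  largestSet P fun C => P (C \ S.2) = 0 ∧ memOn P C x S.1

/-- The stable indicator function `1_{V|A} : X → L⁰`. -/
def cIndicator (P : @Measure Ω mΩ) (S : CondRaw Ω E) (x : Ω → E) : Ω → ℝ :=
  (indBase P S x).indicator fun _ => (1 : ℝ)

/-- Data of a stable elementary function: coefficients and conditional sets. -/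
def ElemRep (Ω E : Type*) := Σ n : ℕ, (Fin n → Ω → ℝ) × (Fin n → CondRaw Ω E)

/-- The function `∑_{k ≤ n} r_k 1_{V_k|A_k}` represented by `ρ`. -/
def repFun (P : @Measure Ω mΩ) (ρ : ElemRep Ω E) : (Ω → E) → Ω → ℝ :=
  fun x ω => ∑ k, ρ.2.1 k ω * cIndicator P (ρ.2.2 k) x ω

/-- The representation `ρ` is admissible: nonnegative `L⁰`-coefficients and a finite
pairwise disjoint family in `𝒳` whose conditional union is `X`. -/
def GoodRep (P : @Measure Ω mΩ) (X : Set (Ω → E)) (𝒳 : Set (CondRaw Ω E))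
    (ρ : ElemRep Ω E) : Prop :=
  (∀ k, AEMeasurable (ρ.2.1 k) P) ∧ (∀ k, ∀ᵐ ω ∂P, 0 ≤ ρ.2.1 k ω) ∧
    (∀ k, ρ.2.2 k ∈ 𝒳) ∧ (∀ i j, i ≠ j → cdisjoint P X (ρ.2.2 i) (ρ.2.2 j)) ∧
    ceq P (cSupFam P X ρ.2.2) (ctop X)

/-- A stable elementary function. -/
def IsElementary (P : @Measure Ω mΩ) (X : Set (Ω → E)) (𝒳 : Set (CondRaw Ω E))
    (f : (Ω → E) → Ω → ℝ) : Prop :=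
  ∃ ρ : ElemRep Ω E, GoodRep P X 𝒳 ρ ∧ ∀ x ∈ X, f x =ᵐ[P] repFun P ρ x

/-- The stable Lebesgue integral `∑_k r_k μ(V_k|A_k)` of the elementary representation. -/
def repInt (μ : CondRaw Ω E → Ω → ℝ≥0∞) (ρ : ElemRep Ω E) : Ω → ℝ≥0∞ :=
  fun ω => ∑ k, ENNReal.ofReal (ρ.2.1 k ω) * μ (ρ.2.2 k) ω

/-- The stable Lebesgue integral of a nonnegative function, as the supremum of the
integrals of the dominated stable elementary functions. -/
def cIntNN (P : @Measure Ω mΩ) (X : Set (Ω → E)) (𝒳 : Set (CondRaw Ω E))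
    (μ : CondRaw Ω E → Ω → ℝ≥0∞) (f : (Ω → E) → Ω → ℝ) : Ω → ℝ≥0∞ :=
  fun ω =>
    ⨆ ρ : {ρ : ElemRep Ω E // GoodRep P X 𝒳 ρ ∧
        ∀ x ∈ X, ∀ᵐ ω' ∂P, repFun P ρ x ω' ≤ f x ω'},
      repInt μ ρ.1 ω

/-- The positive part `f⁺` of an `L⁰`-valued function. -/
def fplus (f : (Ω → E) → Ω → ℝ) : (Ω → E) → Ω → ℝ := fun x ω => max (f x ω) 0

/-- The negative part `f⁻` of an `L⁰`-valued function. -/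
def fminus (f : (Ω → E) → Ω → ℝ) : (Ω → E) → Ω → ℝ := fun x ω => max (-(f x ω)) 0

/-- Stable integrability of `f : X → L⁰`. -/
def CIntegrable (P : @Measure Ω mΩ) (X : Set (Ω → E)) (𝒳 : Set (CondRaw Ω E))
    (μ : CondRaw Ω E → Ω → ℝ≥0∞) (f : (Ω → E) → Ω → ℝ) : Prop :=
  StablyMeasurable P X 𝒳 f ∧ (∀ᵐ ω ∂P, cIntNN P X 𝒳 μ (fplus f) ω < ∞) ∧
    ∀ᵐ ω ∂P, cIntNN P X 𝒳 μ (fminus f) ω < ∞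

/-- The stable Lebesgue integral `∫_X f dμ := ∫ f⁺ dμ − ∫ f⁻ dμ`. -/
def cInt (P : @Measure Ω mΩ) (X : Set (Ω → E)) (𝒳 : Set (CondRaw Ω E))
    (μ : CondRaw Ω E → Ω → ℝ≥0∞) (f : (Ω → E) → Ω → ℝ) : Ω → ℝ :=
  fun ω => (cIntNN P X 𝒳 μ (fplus f) ω).toReal - (cIntNN P X 𝒳 μ (fminus f) ω).toReal

/-! ### Products and sections -/

/-- The pairing `ω ↦ (x ω, y ω)`. -/
def pairFn (x : Ω → E) (y : Ω → F') : Ω → E × F' := fun ω => (x ω, y ω)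

/-- The Cartesian product `X × Y` of two stable sets, as a stable set of functions
`Ω → E × F'`. -/
def prodSet (P : @Measure Ω mΩ) (X : Set (Ω → E)) (Y : Set (Ω → F')) :
    Set (Ω → E × F') :=
  {z | ∃ x ∈ X, ∃ y ∈ Y, z =ᵐ[P] pairFn x y}

/-- The conditional rectangle `V|A × W|B := (V × W)|A ∩ B`. -/
def crect (P : @Measure Ω mΩ) (S : CondRaw Ω E) (T : CondRaw Ω F') :
    CondRaw Ω (E × F') :=
  (prodSet P S.1 T.1, S.2 ∩ T.2)

/-- The stable product σ-algebra `𝒳 ⊗ 𝒴`, generated by the conditional rectangles. -/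
def prodSigma (P : @Measure Ω mΩ) (X : Set (Ω → E)) (Y : Set (Ω → F'))
    (𝒳 : Set (CondRaw Ω E)) (𝒴 : Set (CondRaw Ω F')) : Set (CondRaw Ω (E × F')) :=
  sigmaGen P (prodSet P X Y) {R | ∃ S ∈ 𝒳, ∃ T ∈ 𝒴, ceq P R (crect P S T)}

/-- The conditional `x`-section `(Z|C)_x` of a conditional subset of `X × Y`. -/
def xsection (P : @Measure Ω mΩ) (Y : Set (Ω → F')) (Z : CondRaw Ω (E × F'))
    (x : Ω → E) : CondRaw Ω F' :=
  ({y ∈ Y | memOn P (largestSet P fun D => P (D \ Z.2) = 0 ∧ ∃ y ∈ Y, memOn P D (pairFn x y) Z.1)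
      (pairFn x y) Z.1},
    largestSet P fun D => P (D \ Z.2) = 0 ∧ ∃ y ∈ Y, memOn P D (pairFn x y) Z.1)

/-- The conditional `y`-section `(Z|C)_y` of a conditional subset of `X × Y`. -/
def ysection (P : @Measure Ω mΩ) (X : Set (Ω → E)) (Z : CondRaw Ω (E × F'))
    (y : Ω → F') : CondRaw Ω E :=
  ({x ∈ X | memOn P (largestSet P fun D => P (D \ Z.2) = 0 ∧ ∃ x ∈ X, memOn P D (pairFn x y) Z.1)
      (pairFn x y) Z.1},
    largestSet P fun D => P (D \ Z.2) = 0 ∧ ∃ x ∈ X, memOn P D (pairFn x y) Z.1)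

/-! ### Conditional subsets of `L⁰_m(E)` associated to measurable sets -/

/-- `L⁰_m(F) = {x ∈ L⁰_m(E) : x ∈ F a.s.}` for a measurable `F ⊆ E`. -/
def l0mF (P : @Measure Ω mΩ) {E : Type*} [MeasurableSpace E] (F : Set E) : Set (Ω → E) :=
  {x | AEMeasurable x P ∧ ∀ᵐ ω ∂P, x ω ∈ F}

/-- `∑ L⁰_m(F_k)|A_k = {x ∈ L⁰_m(E) : x ∈ F_k a.s. on A_k for all k}`. -/
def l0mConcat (P : @Measure Ω mΩ) {E : Type*} [MeasurableSpace E]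
    (A : Partition mΩ P) (F : ℕ → Set E) : Set (Ω → E) :=
  {x | AEMeasurable x P ∧ ∀ k, ∀ᵐ ω ∂P, ω ∈ A.part k → x ω ∈ F k}

/-- The stable ring `ℛ` on `L⁰_m(E)` generated by a measurable structure on `E`:
all conditional subsets of the form `(∑ L⁰_m(F_k)|A_k)|B`. -/
def ringR (P : @Measure Ω mΩ) (E : Type*) [MeasurableSpace E] : Set (CondRaw Ω E) :=
  {S | ∃ (F : ℕ → Set E) (A : Partition mΩ P) (B : Set Ω),
    (∀ k, MeasurableSet (F k)) ∧ MeasurableSet[mΩ] B ∧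
      ceq P S (l0mConcat P A F, B)}

end CondMT

namespace CondMT

section Helpers

variable {Ω E : Type*} {mΩ : MeasurableSpace Ω} {P : @Measure Ω mΩ}

theorem null_diff_iff (C D : Set Ω) :
    P (C \ D) = 0 ↔ ∀ᵐ ω ∂P, ω ∈ C → ω ∈ D :=
  (ae_le_set (μ := P) (s := C) (t := D)).symm

/-- Exhaustion: a family of measurable sets closed under countable unions has a largest
element modulo null sets. -/
theorem exhaust [IsProbabilityMeasure P] (Φ : Set Ω → Prop) (h0 : Φ ∅)
    (hm : ∀ C, Φ C → MeasurableSet C)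
    (hU : ∀ C : ℕ → Set Ω, (∀ k, Φ (C k)) → Φ (⋃ k, C k)) :
    ∃ D, Φ D ∧ ∀ C, Φ C → ∀ᵐ ω ∂P, ω ∈ C → ω ∈ D := by
  obtain ⟨u, -, hu, hmem⟩ := exists_seq_tendsto_sSup (S := P '' {C | Φ C})
    ⟨P ∅, ∅, h0, rfl⟩ (OrderTop.bddAbove _)
  choose C hC hCu using hmem
  refine ⟨⋃ k, C k, hU C hC, fun C' hC' => ?_⟩
  rw [← null_diff_iff]
  have hD : MeasurableSet (⋃ k, C k) := hm _ (hU C hC)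
  have h1 : sSup (P '' {C | Φ C}) ≤ P (⋃ k, C k) := by
    refine le_of_tendsto' hu fun n => ?_
    rw [← hCu n]
    exact measure_mono (subset_iUnion C n)
  have h2 : Φ ((⋃ k, C k) ∪ C') := by
    have := hU (fun n => Nat.casesOn n C' C) (by rintro (_ | n); exacts [hC', hC n])
    convert this using 1
    ext ω
    simp only [mem_union, mem_iUnion]
    constructor
    · rintro (⟨k, hk⟩ | h)
      · exact ⟨k + 1, hk⟩
      · exact ⟨0, h⟩
    · rintro ⟨_ | k, hk⟩
      · exact Or.inr hk
      · exact Or.inl ⟨k, hk⟩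
  have h3 : P ((⋃ k, C k) ∪ C') ≤ P (⋃ k, C k) :=
    (le_sSup (mem_image_of_mem P h2)).trans h1
  rw [← union_sdiff_self, measure_union disjoint_sdiff_right ((hm _ hC').diff hD)] at h3
  have hfin : P (⋃ k, C k) ≠ ∞ := measure_ne_top _ _
  by_contra hne
  exact absurd h3 (not_le.mpr (ENNReal.lt_add_right hfin hne))

theorem concat_ae (A : Partition mΩ P) (x : ℕ → Ω → E) :
    ∀ᵐ ω ∂P, ∀ k, ω ∈ A.part k → A.concat x ω = x k ω := by
  have h : ∀ᵐ ω ∂P, ∀ i j, i ≠ j → ¬ (ω ∈ A.part i ∧ ω ∈ A.part j) := by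
    rw [ae_all_iff]; intro i
    rw [ae_all_iff]; intro j
    by_cases hij : i = j
    · exact Eventually.of_forall fun ω h => absurd hij h
    · have := A.disj i j hij
      have h2 : ∀ᵐ ω ∂P, ω ∉ A.part i ∩ A.part j := measure_eq_zero_iff_ae_notMem.mp this
      filter_upwards [h2] with ω hω _ h3 using hω h3
  filter_upwards [h] with ω hω k hk
  classical
  have hex : ∃ k, ω ∈ A.part k := ⟨k, hk⟩
  have hf : Nat.find hex = k := by
    by_contra hne
    exact hω _ _ hne ⟨Nat.find_spec hex, hk⟩
  unfold Partition.concat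
  rw [dif_pos hex]
  congr! 

theorem cover_ae (A : Partition mΩ P) : ∀ᵐ ω ∂P, ∃ k, ω ∈ A.part k := by
  have h2 : ∀ᵐ ω ∂P, ω ∉ (⋃ k, A.part k)ᶜ := measure_eq_zero_iff_ae_notMem.mp A.cover
  filter_upwards [h2] with ω hω
  simpa using hω

/-- The partition obtained by disjointing a sequence of sets. -/
def mkPart (P : @Measure Ω mΩ) (C : ℕ → Set Ω) (hC : ∀ k, MeasurableSet (C k)) :
    Partition mΩ P where
  part := fun n => Nat.casesOn n (⋃ k, C k)ᶜ (disjointed C)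
  meas := by
    rintro (_ | n)
    · exact (MeasurableSet.iUnion hC).compl
    · exact MeasurableSet.disjointed hC n
  disj := by
    have key : ∀ k, P ((⋃ k, C k)ᶜ ∩ disjointed C k) = 0 := by
      intro k
      have : (⋃ k, C k)ᶜ ∩ disjointed C k = ∅ := by
        ext ω
        simp only [mem_inter_iff, mem_compl_iff, mem_iUnion, mem_empty_iff_false, iff_false]
        rintro ⟨h1, h2⟩
        exact h1 ⟨k, disjointed_subset C k h2⟩
      rw [this]; simp
    rintro (_ | i) (_ | j) hij
    · exact absurd rfl hij
    · exact key j
    · rw [inter_comm]; exact key i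
    · have : Disjoint (disjointed C i) (disjointed C j) :=
        disjoint_disjointed C (fun h => hij (by rw [h]))
      show P (disjointed C i ∩ disjointed C j) = 0
      rw [this.inter_eq]; simp
  cover := by
    have : (⋃ n : ℕ, (Nat.casesOn n (⋃ k, C k)ᶜ (disjointed C) : Set Ω))ᶜ = ∅ := by
      rw [compl_empty_iff, eq_univ_iff_forall]
      intro ω
      by_cases h : ω ∈ ⋃ k, C k
      · rw [← iUnion_disjointed] at h
        obtain ⟨k, hk⟩ := mem_iUnion.mp h
        exact mem_iUnion.mpr ⟨k + 1, hk⟩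
      · exact mem_iUnion.mpr ⟨0, h⟩
    rw [this]; simp

/-- Gluing a sequence of elements of a stable set along disjointed sets. -/
theorem glue {V : Set (Ω → E)} (hV : Stable P V) (C : ℕ → Set Ω)
    (hC : ∀ k, MeasurableSet (C k)) (y : ℕ → Ω → E) (hy : ∀ k, y k ∈ V) :
    ∃ z ∈ V, ∀ᵐ ω ∂P, ∀ k, ω ∈ disjointed C k → z ω = y k ω := by
  refine ⟨(mkPart P C hC).concat (fun n => Nat.casesOn n (y 0) y),
    hV.2.2 _ _ (by rintro (_ | n); exacts [hy 0, hy n]), ?_⟩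
  filter_upwards [concat_ae (mkPart P C hC) (fun n => Nat.casesOn n (y 0) y)] with ω hω k hk
  exact hω (k + 1) hk

theorem exists_disjointed {C : ℕ → Set Ω} {ω : Ω} (h : ∃ k, ω ∈ C k) :
    ∃ k, ω ∈ disjointed C k := by
  have : ω ∈ ⋃ k, C k := mem_iUnion.mpr h
  rw [← iUnion_disjointed] at this
  exact mem_iUnion.mp this

/-- Two-piece gluing. -/
theorem glue₂ {V : Set (Ω → E)} (hV : Stable P V) {C : Set Ω} (hC : MeasurableSet C)
    {y z : Ω → E} (hy : y ∈ V) (hz : z ∈ V) :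
    ∃ u ∈ V, (∀ᵐ ω ∂P, ω ∈ C → u ω = y ω) ∧ ∀ᵐ ω ∂P, ω ∈ Cᶜ → u ω = z ω := by
  obtain ⟨u, hu, h⟩ := glue hV (fun n => Nat.casesOn n C (fun _ => Cᶜ))
    (by rintro (_ | n); exacts [hC, hC.compl]) (fun n => Nat.casesOn n y (fun _ => z))
    (by rintro (_ | n); exacts [hy, hz])
  refine ⟨u, hu, ?_, ?_⟩
  · filter_upwards [h] with ω hω hωC
    refine hω 0 ?_
    rw [disjointed_zero]
    exact hωC
  · filter_upwards [h] with ω hω hωC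
    obtain ⟨k, hk⟩ := exists_disjointed (C := fun n => Nat.casesOn n C (fun _ => Cᶜ)) (ω := ω)
      ⟨1, hωC⟩
    match k, hk with
    | 0, hk => exact absurd (disjointed_subset _ _ hk) hωC
    | k + 1, hk => exact hω (k + 1) hk

/-- `x|C` belongs to `S`. -/
def memb (P : @Measure Ω mΩ) (S : CondRaw Ω E) (x : Ω → E) (C : Set Ω) : Prop :=
  (∀ᵐ ω ∂P, ω ∈ C → ω ∈ S.2) ∧ memOn P C x S.1

theorem memb.mono {S : CondRaw Ω E} {x : Ω → E} {C D : Set Ω} (h : memb P S x D)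
    (hCD : ∀ᵐ ω ∂P, ω ∈ C → ω ∈ D) : memb P S x C := by
  obtain ⟨h1, y, hy, h2⟩ := h
  refine ⟨?_, y, hy, ?_⟩
  · filter_upwards [h1, hCD] with ω a b c using a (b c)
  · filter_upwards [h2, hCD] with ω a b c using a (b c)

theorem memb.congr {S : CondRaw Ω E} {x y : Ω → E} {C : Set Ω} (h : memb P S x C)
    (hxy : ∀ᵐ ω ∂P, ω ∈ C → x ω = y ω) : memb P S y C := by
  obtain ⟨h1, z, hz, h2⟩ := h
  refine ⟨h1, z, hz, ?_⟩
  filter_upwards [h2, hxy] with ω a b c using (b c).symm.trans (a c)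

/-- `S` is represented by the local function `I`. -/
def Rep (P : @Measure Ω mΩ) (X : Set (Ω → E)) (S : CondRaw Ω E) (I : (Ω → E) → Set Ω) : Prop :=
  IsCond P X S ∧ ∀ x ∈ X, MeasurableSet (I x) ∧
    ∀ C, MeasurableSet C → (memb P S x C ↔ ∀ᵐ ω ∂P, ω ∈ C → ω ∈ I x)

theorem exists_rep [IsProbabilityMeasure P] {X : Set (Ω → E)} {S : CondRaw Ω E}
    (hS : IsCond P X S) : ∃ I, Rep P X S I := by
  have key : ∀ x : Ω → E, ∃ D, (MeasurableSet D ∧ memb P S x D) ∧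
      ∀ C, (MeasurableSet C ∧ memb P S x C) → ∀ᵐ ω ∂P, ω ∈ C → ω ∈ D := by
    intro x
    refine exhaust (fun C => MeasurableSet C ∧ memb P S x C) ?_ (fun C h => h.1) ?_
    · obtain ⟨y, hy⟩ := hS.1.1
      exact ⟨MeasurableSet.empty, by simp, y, hy, by simp⟩
    · intro C hC
      choose hCm hC1 y hy hxy using hC
      refine ⟨MeasurableSet.iUnion hCm, ?_, ?_⟩
      · filter_upwards [ae_all_iff.mpr hC1] with ω a b
        obtain ⟨k, hk⟩ := mem_iUnion.mp b
        exact a k hk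
      · obtain ⟨z, hz, h⟩ := glue hS.1 C hCm y hy
        refine ⟨z, hz, ?_⟩
        filter_upwards [h, ae_all_iff.mpr hxy] with ω a b c
        obtain ⟨k, hk⟩ := exists_disjointed (mem_iUnion.mp c)
        rw [a k hk, b k (disjointed_subset _ _ hk)]
  choose I hI hI2 using key
  exact ⟨I, hS, fun x _ => ⟨(hI x).1, fun C hC =>
    ⟨fun h => hI2 x C ⟨hC, h⟩, fun h => (hI x).2.mono h⟩⟩⟩

/-- Locality of a function with values in the measure algebra. -/
def Local (P : @Measure Ω mΩ) (X : Set (Ω → E)) (I : (Ω → E) → Set Ω) : Prop :=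
  (∀ x ∈ X, MeasurableSet (I x)) ∧
  ∀ x ∈ X, ∀ y ∈ X, ∀ C, MeasurableSet C → (∀ᵐ ω ∂P, ω ∈ C → x ω = y ω) →
    ∀ᵐ ω ∂P, ω ∈ C → ω ∈ I x → ω ∈ I y

theorem Rep.self {X : Set (Ω → E)} {S : CondRaw Ω E} {I : (Ω → E) → Set Ω}
    (h : Rep P X S I) {x : Ω → E} (hx : x ∈ X) : memb P S x (I x) :=
  ((h.2 x hx).2 _ (h.2 x hx).1).mpr (by simp)

theorem Rep.isLocal {X : Set (Ω → E)} {S : CondRaw Ω E} {I : (Ω → E) → Set Ω}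
    (h : Rep P X S I) : Local P X I := by
  refine ⟨fun x hx => (h.2 x hx).1, fun x hx y hy C hC hxy => ?_⟩
  have h1 : memb P S x (C ∩ I x) := (h.self hx).mono (by
    filter_upwards with ω hω using hω.2)
  have h2 : memb P S y (C ∩ I x) := h1.congr (by
    filter_upwards [hxy] with ω a b using a b.1)
  have h3 := ((h.2 y hy).2 _ (hC.inter (h.2 x hx).1)).mp h2
  filter_upwards [h3] with ω a b c using a ⟨b, c⟩

theorem realize [IsProbabilityMeasure P] {X : Set (Ω → E)} (hX : Stable P X)
    {I : (Ω → E) → Set Ω} (hI : Local P X I) : ∃ S, Rep P X S I := by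
  obtain ⟨A, ⟨hA, x₀, hx₀, hAx₀⟩, hmax⟩ := exhaust (P := P)
    (fun C => MeasurableSet C ∧ ∃ x ∈ X, ∀ᵐ ω ∂P, ω ∈ C → ω ∈ I x)
    (by
      obtain ⟨x, hx⟩ := hX.1
      exact ⟨MeasurableSet.empty, x, hx, by simp⟩)
    (fun C h => h.1)
    (by
      intro C hC
      choose hCm x hx h using hC
      refine ⟨MeasurableSet.iUnion hCm, ?_⟩
      obtain ⟨z, hz, hzx⟩ := glue hX C hCm x hx
      refine ⟨z, hz, ?_⟩
      have hl : ∀ᵐ ω ∂P, ∀ k, ω ∈ disjointed C k → ω ∈ I (x k) → ω ∈ I z := by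
        rw [ae_all_iff]
        intro k
        refine hI.2 _ (hx k) _ hz _ (MeasurableSet.disjointed hCm k) ?_
        filter_upwards [hzx] with ω a b using (a k b).symm
      filter_upwards [hl, ae_all_iff.mpr h] with ω a b c
      obtain ⟨k, hk⟩ := exists_disjointed (mem_iUnion.mp c)
      exact a k hk (b k (disjointed_subset _ _ hk)))
  refine ⟨({x ∈ X | ∀ᵐ ω ∂P, ω ∈ A → ω ∈ I x}, A), ⟨⟨⟨x₀, hx₀, hAx₀⟩, ?_, ?_⟩, ?_, hA⟩, ?_⟩
  · rintro x ⟨hx, h⟩ y hxy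
    have hy := hX.2.1 x hx y hxy
    refine ⟨hy, ?_⟩
    have := hI.2 x hx y hy univ MeasurableSet.univ (by filter_upwards [hxy] with ω a _ using a)
    filter_upwards [this, h] with ω a b c using a trivial (b c)
  · intro B x hx
    have hz : B.concat x ∈ X := hX.2.2 B x fun k => (hx k).1
    refine ⟨hz, ?_⟩
    have hl : ∀ᵐ ω ∂P, ∀ k, ω ∈ B.part k → ω ∈ I (x k) → ω ∈ I (B.concat x) := by
      rw [ae_all_iff]
      intro k
      refine hI.2 _ (hx k).1 _ hz _ (B.meas k) ?_
      filter_upwards [concat_ae B x] with ω a b using (a k b).symm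
    filter_upwards [hl, cover_ae B, ae_all_iff.mpr fun k => (hx k).2] with ω a ⟨k, hk⟩ b c
    exact a k hk (b k c)
  · exact fun x hx => hx.1
  · intro x hx
    refine ⟨hI.1 x hx, fun C hC => ⟨?_, ?_⟩⟩
    · rintro ⟨h1, y, ⟨hy, hyA⟩, h2⟩
      have := hI.2 y hy x hx C hC (by filter_upwards [h2] with ω a b using (a b).symm)
      filter_upwards [this, h1, hyA] with ω a b c d using a d (c (b d))
    · intro h
      have hCA := hmax C ⟨hC, x, hx, h⟩
      refine ⟨hCA, ?_⟩
      obtain ⟨u, hu, h1, h2⟩ := glue₂ hX hC hx hx₀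
      refine ⟨u, ⟨hu, ?_⟩, ?_⟩
      · have e1 := hI.2 x hx u hu C hC (by filter_upwards [h1] with ω a b using (a b).symm)
        have e2 := hI.2 x₀ hx₀ u hu Cᶜ hC.compl
          (by filter_upwards [h2] with ω a b using (a b).symm)
        filter_upwards [e1, e2, h, hAx₀] with ω a b c d e
        by_cases hω : ω ∈ C
        · exact a hω (c hω)
        · exact b hω (d e)
      · filter_upwards [h1] with ω a b using (a b).symm

theorem cle_iff {X : Set (Ω → E)} {S T : CondRaw Ω E}
    {I J : (Ω → E) → Set Ω} (hS : Rep P X S I) (hT : Rep P X T J) :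
    cle P S T ↔ ∀ x ∈ X, ∀ᵐ ω ∂P, ω ∈ I x → ω ∈ J x := by
  constructor
  · rintro ⟨h1, h2⟩ x hx
    rw [null_diff_iff] at h1
    refine ((hT.2 x hx).2 _ (hS.2 x hx).1).mp ?_
    obtain ⟨h3, y, hy, h4⟩ := hS.self hx
    obtain ⟨z, hz, h5⟩ := h2 y hy
    refine ⟨?_, z, hz, ?_⟩
    · filter_upwards [h1, h3] with ω a b c using a (b c)
    · filter_upwards [h3, h4, h5] with ω a b c d using (b d).trans (c (a d))
  · intro h
    have key : ∀ x ∈ S.1, memb P T x S.2 := by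
      intro x hx
      have hxX := hS.1.2.1 hx
      have h1 : memb P S x S.2 := ⟨by simp, x, hx, by simp⟩
      have h2 := ((hS.2 x hxX).2 _ hS.1.2.2).mp h1
      refine ((hT.2 x hxX).2 _ hS.1.2.2).mpr ?_
      filter_upwards [h2, h x hxX] with ω a b c using b (a c)
    obtain ⟨x, hx⟩ := hS.1.1.1
    exact ⟨(null_diff_iff _ _).mpr (key x hx).1, fun x hx => (key x hx).2⟩

theorem Rep.congr {X : Set (Ω → E)} {S : CondRaw Ω E} {I J : (Ω → E) → Set Ω}
    (hS : Rep P X S I) (hJ : ∀ x ∈ X, MeasurableSet (J x))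
    (h : ∀ x ∈ X, ∀ᵐ ω ∂P, ω ∈ I x ↔ ω ∈ J x) : Rep P X S J := by
  refine ⟨hS.1, fun x hx => ⟨hJ x hx, fun C hC => ?_⟩⟩
  rw [(hS.2 x hx).2 C hC]
  constructor
  · intro h'
    filter_upwards [h', h x hx] with ω a b c using b.mp (a c)
  · intro h'
    filter_upwards [h', h x hx] with ω a b c using b.mpr (a c)

theorem Rep.of_ceq [IsProbabilityMeasure P] {X : Set (Ω → E)} {S T : CondRaw Ω E}
    {I : (Ω → E) → Set Ω}
    (hS : Rep P X S I) (hT : IsCond P X T) (h : ceq P S T) : Rep P X T I := by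
  obtain ⟨J, hJ⟩ := exists_rep hT
  refine hJ.congr (fun x hx => (hS.2 x hx).1) fun x hx => ?_
  filter_upwards [(cle_iff hS hJ).mp h.1 x hx, (cle_iff hJ hS).mp h.2 x hx] with ω a b
  exact ⟨b, a⟩

theorem rep_ceq {X : Set (Ω → E)} {S T : CondRaw Ω E} {I : (Ω → E) → Set Ω}
    (hS : Rep P X S I) (hT : Rep P X T I) : ceq P S T :=
  ⟨(cle_iff hS hT).mpr (by simp), (cle_iff hT hS).mpr (by simp)⟩

theorem cSup_rep [IsProbabilityMeasure P] {X : Set (Ω → E)} {s : Set (CondRaw Ω E)}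
    {a : CondRaw Ω E} {I : (Ω → E) → Set Ω} (ha : IsSupOf P X s a) (hI : Rep P X a I) :
    Rep P X (cSup P X s) I := by
  have h : ∃ a, IsSupOf P X s a := ⟨a, ha⟩
  unfold cSup
  rw [dif_pos h]
  have hb := h.choose_spec
  exact hI.of_ceq hb.1 ⟨ha.2.2 _ hb.1 hb.2.1, hb.2.2 _ ha.1 ha.2.1⟩

theorem cInf_rep [IsProbabilityMeasure P] {X : Set (Ω → E)} {s : Set (CondRaw Ω E)}
    {a : CondRaw Ω E} {I : (Ω → E) → Set Ω} (ha : IsInfOf P X s a) (hI : Rep P X a I) :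
    Rep P X (cInf P X s) I := by
  have h : ∃ a, IsInfOf P X s a := ⟨a, ha⟩
  unfold cInf
  rw [dif_pos h]
  have hb := h.choose_spec
  exact hI.of_ceq hb.1 ⟨hb.2.2 _ ha.1 ha.2.1, ha.2.2 _ hb.1 hb.2.1⟩

theorem Local.iUnion {X : Set (Ω → E)} {I : ℕ → (Ω → E) → Set Ω}
    (h : ∀ k, Local P X (I k)) : Local P X (fun x => ⋃ k, I k x) := by
  refine ⟨fun x hx => MeasurableSet.iUnion fun k => (h k).1 x hx, ?_⟩
  intro x hx y hy C hC hxy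
  filter_upwards [ae_all_iff.mpr fun k => (h k).2 x hx y hy C hC hxy] with ω a b c
  obtain ⟨k, hk⟩ := mem_iUnion.mp c
  exact mem_iUnion.mpr ⟨k, a k b hk⟩

theorem Local.compl {X : Set (Ω → E)} {I : (Ω → E) → Set Ω}
    (h : Local P X I) : Local P X (fun x => (I x)ᶜ) := by
  refine ⟨fun x hx => (h.1 x hx).compl, ?_⟩
  intro x hx y hy C hC hxy
  filter_upwards [h.2 y hy x hx C hC (by filter_upwards [hxy] with ω a b using (a b).symm)]
    with ω a b c d using c (a b d)

theorem Local.inter {X : Set (Ω → E)} {I J : (Ω → E) → Set Ω}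
    (h : Local P X I) (h' : Local P X J) : Local P X (fun x => I x ∩ J x) := by
  refine ⟨fun x hx => (h.1 x hx).inter (h'.1 x hx), ?_⟩
  intro x hx y hy C hC hxy
  filter_upwards [h.2 x hx y hy C hC hxy, h'.2 x hx y hy C hC hxy]
    with ω a b c d using ⟨a c d.1, b c d.2⟩

theorem cSupFam_rep [IsProbabilityMeasure P] {X : Set (Ω → E)} (hX : Stable P X)
    {S : ℕ → CondRaw Ω E} {I : ℕ → (Ω → E) → Set Ω} (h : ∀ k, Rep P X (S k) (I k)) :
    Rep P X (cSupFam P X S) (fun x => ⋃ k, I k x) := by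
  obtain ⟨a, ha⟩ := realize hX (Local.iUnion fun k => (h k).isLocal)
  refine cSup_rep ⟨ha.1, ?_, ?_⟩ ha
  · rintro _ ⟨k, rfl⟩
    refine (cle_iff (h k) ha).mpr fun x hx => ?_
    filter_upwards with ω hω using mem_iUnion.mpr ⟨k, hω⟩
  · intro c hc hle
    obtain ⟨J, hJ⟩ := exists_rep hc
    refine (cle_iff ha hJ).mpr fun x hx => ?_
    have := fun k => (cle_iff (h k) hJ).mp (hle _ ⟨k, rfl⟩) x hx
    filter_upwards [ae_all_iff.mpr this] with ω a b
    obtain ⟨k, hk⟩ := mem_iUnion.mp b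
    exact a k hk

theorem cInf₂_rep [IsProbabilityMeasure P] {X : Set (Ω → E)} (hX : Stable P X)
    {S T : CondRaw Ω E} {I J : (Ω → E) → Set Ω} (hS : Rep P X S I) (hT : Rep P X T J) :
    Rep P X (cInf₂ P X S T) (fun x => I x ∩ J x) := by
  obtain ⟨a, ha⟩ := realize hX (hS.isLocal.inter hT.isLocal)
  refine cInf_rep ⟨ha.1, ?_, ?_⟩ ha
  · rintro b (rfl | rfl)
    · exact (cle_iff ha hS).mpr fun x hx => by filter_upwards with ω hω using hω.1
    · exact (cle_iff ha hT).mpr fun x hx => by filter_upwards with ω hω using hω.2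
  · intro c hc hle
    obtain ⟨K, hK⟩ := exists_rep hc
    refine (cle_iff hK ha).mpr fun x hx => ?_
    filter_upwards [(cle_iff hK hS).mp (hle _ (Or.inl rfl)) x hx,
      (cle_iff hK hT).mp (hle _ (Or.inr rfl)) x hx] with ω a b c using ⟨a c, b c⟩

theorem cbot_rep {X : Set (Ω → E)} (hX : Stable P X) :
    Rep P X (cbot X) (fun _ => ∅) := by
  refine ⟨⟨hX, Subset.rfl, MeasurableSet.empty⟩, fun x hx => ⟨MeasurableSet.empty, fun C hC => ?_⟩⟩
  constructor
  · exact fun h => h.1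
  · exact fun h => ⟨h, x, hx, by simp⟩

theorem ctop_rep {X : Set (Ω → E)} (hX : Stable P X) :
    Rep P X (ctop X) (fun _ => univ) := by
  refine ⟨⟨hX, Subset.rfl, MeasurableSet.univ⟩, fun x hx => ⟨MeasurableSet.univ, fun C hC => ?_⟩⟩
  constructor
  · exact fun h => h.1
  · exact fun h => ⟨h, x, hx, by simp⟩

theorem cdisjoint_iff [IsProbabilityMeasure P] {X : Set (Ω → E)} (hX : Stable P X)
    {S T : CondRaw Ω E} {I J : (Ω → E) → Set Ω} (hS : Rep P X S I) (hT : Rep P X T J) :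
    cdisjoint P X S T ↔ ∀ x ∈ X, ∀ᵐ ω ∂P, ¬ (ω ∈ I x ∧ ω ∈ J x) := by
  have h := cInf₂_rep hX hS hT
  constructor
  · intro hd x hx
    filter_upwards [(cle_iff h (cbot_rep hX)).mp hd.1 x hx] with ω a b using a b
  · intro hd
    refine ⟨(cle_iff h (cbot_rep hX)).mpr fun x hx => ?_,
      (cle_iff (cbot_rep hX) h).mpr fun x hx => by simp⟩
    filter_upwards [hd x hx] with ω a b using a b

theorem ccompl_rep [IsProbabilityMeasure P] {X : Set (Ω → E)} (hX : Stable P X)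
    {S : CondRaw Ω E} {I : (Ω → E) → Set Ω} (hS : Rep P X S I) :
    Rep P X (ccompl P X S) (fun x => (I x)ᶜ) := by
  obtain ⟨a, ha⟩ := realize hX hS.isLocal.compl
  refine cSup_rep ⟨ha.1, ?_, ?_⟩ ha
  · rintro b ⟨hb, hd⟩
    obtain ⟨J, hJ⟩ := exists_rep hb
    refine (cle_iff hJ ha).mpr fun x hx => ?_
    filter_upwards [(cdisjoint_iff hX hJ hS).mp hd x hx] with ω h1 h2 h3 using h1 ⟨h2, h3⟩
  · intro c hc hle
    refine hle a ⟨ha.1, (cdisjoint_iff hX ha hS).mpr fun x hx => ?_⟩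
    filter_upwards with ω h using h.1 h.2

theorem crestrict_rep {X : Set (Ω → E)} {S : CondRaw Ω E} {I : (Ω → E) → Set Ω}
    (hS : Rep P X S I) {B : Set Ω} (hB : MeasurableSet B) :
    Rep P X (crestrict S B) (fun x => I x ∩ B) := by
  refine ⟨⟨hS.1.1, hS.1.2.1, hS.1.2.2.inter hB⟩, fun x hx =>
    ⟨(hS.2 x hx).1.inter hB, fun C hC => ?_⟩⟩
  constructor
  · rintro ⟨h1, h2⟩
    have := ((hS.2 x hx).2 C hC).mp ⟨by filter_upwards [h1] with ω a b using (a b).1, h2⟩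
    filter_upwards [this, h1] with ω a b c using ⟨a c, (b c).2⟩
  · intro h
    have := ((hS.2 x hx).2 C hC).mpr (by filter_upwards [h] with ω a b using (a b).1)
    exact ⟨by filter_upwards [this.1, h] with ω a b c using ⟨a c, (b c).2⟩, this.2⟩

theorem mem_of_rep {X : Set (Ω → E)} {𝒳 : Set (CondRaw Ω E)}
    (hsig : IsStableSigma P X 𝒳) {S T : CondRaw Ω E} {I : (Ω → E) → Set Ω}
    (hS : S ∈ 𝒳) (hSI : Rep P X S I) (hTI : Rep P X T I) : T ∈ 𝒳 :=
  hsig.1.2.2.1 S hS T hTI.1 (rep_ceq hSI hTI)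

theorem cbot_mem [IsProbabilityMeasure P] {X : Set (Ω → E)} (hX : Stable P X)
    {𝒳 : Set (CondRaw Ω E)} (hsig : IsStableSigma P X 𝒳) : cbot X ∈ 𝒳 := by
  refine mem_of_rep hsig (hsig.2.2.1 _ hsig.2.1) (ccompl_rep hX (ctop_rep hX)) ?_
  simpa using cbot_rep hX

theorem measure_cbot {X : Set (Ω → E)} {𝒳 : Set (CondRaw Ω E)} (hb : cbot X ∈ 𝒳)
    {μ : CondRaw Ω E → Ω → ℝ≥0∞} (hμ : IsStableMeasureOn P X 𝒳 μ) :
    ∀ᵐ ω ∂P, μ (cbot X) ω = 0 := by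
  filter_upwards [hμ.2.1 _ hb] with ω h
  rw [h]
  simp [cbot]

theorem concat_const (A : Partition mΩ P) (x : Ω → E) : A.concat (fun _ => x) = x := by
  ext ω
  unfold Partition.concat
  split_ifs <;> rfl

/-- The sequence `cbot, S, S, …`. -/
def botSeq (X : Set (Ω → E)) (S : CondRaw Ω E) : ℕ → CondRaw Ω E
  | 0 => cbot X
  | _ + 1 => S

theorem restrict_ceq {X : Set (Ω → E)} {S : CondRaw Ω E} (hS : IsCond P X S)
    {B : Set Ω} (hB : MeasurableSet B) :
    ceq P (condConcat P (mkPart P (fun _ => B) (fun _ => hB)) (botSeq X S)) (crestrict S B) := by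
  constructor
  · refine ⟨(null_diff_iff _ _).mpr (Eventually.of_forall ?_), ?_⟩
    · intro ω hω
      obtain ⟨k, hk⟩ := mem_iUnion.mp hω
      match k, hk with
      | 0, hk => exact absurd hk.2 (notMem_empty _)
      | k + 1, hk => exact ⟨hk.2, disjointed_subset (fun _ : ℕ => B) k hk.1⟩
    · rintro f ⟨x, hx, hf⟩
      refine ⟨(mkPart P (fun _ => B) (fun _ => hB)).concat (fun n => x (n - 1 + 1)),
        hS.1.2.2 _ _ fun k => hx (k - 1 + 1), ?_⟩
      filter_upwards [hf, concat_ae (mkPart P (fun _ => B) (fun _ => hB)) x,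
        concat_ae (mkPart P (fun _ => B) (fun _ => hB)) (fun n => x (n - 1 + 1))]
        with ω h1 h2 h3 hω
      obtain ⟨k, hk⟩ := mem_iUnion.mp hω
      match k, hk with
      | 0, hk => exact absurd hk.2 (notMem_empty _)
      | k + 1, hk => rw [h1, h2 _ hk.1, h3 _ hk.1]; rfl
  · refine ⟨(null_diff_iff _ _).mpr (Eventually.of_forall ?_), ?_⟩
    · intro ω hω
      obtain ⟨k, hk⟩ := exists_disjointed (C := fun _ : ℕ => B) ⟨0, hω.2⟩
      exact mem_iUnion.mpr ⟨k + 1, hk, hω.1⟩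
    · intro x hx
      refine ⟨x, ⟨fun _ => x, ?_, ?_⟩, by simp⟩
      · rintro (_ | k)
        · exact hS.2.1 hx
        · exact hx
      · rw [concat_const]

theorem botSeq_mem [IsProbabilityMeasure P] {X : Set (Ω → E)} (hX : Stable P X)
    {𝒳 : Set (CondRaw Ω E)} (hsig : IsStableSigma P X 𝒳) {S : CondRaw Ω E} (hS : S ∈ 𝒳) (k : ℕ) :
    botSeq X S k ∈ 𝒳 := by
  match k with
  | 0 => exact cbot_mem hX hsig
  | k + 1 => exact hS

theorem restrict_mem [IsProbabilityMeasure P] {X : Set (Ω → E)} (hX : Stable P X)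
    {𝒳 : Set (CondRaw Ω E)} (hsig : IsStableSigma P X 𝒳) {S : CondRaw Ω E} (hS : S ∈ 𝒳)
    {B : Set Ω} (hB : MeasurableSet B) : crestrict S B ∈ 𝒳 := by
  have hc := hsig.1.2.1 S hS
  exact hsig.1.2.2.1 _ (hsig.1.2.2.2 _ _ (botSeq_mem hX hsig hS)) _
    ⟨hc.1, hc.2.1, hc.2.2.inter hB⟩ (restrict_ceq hc hB)

theorem restrict_measure [IsProbabilityMeasure P] {X : Set (Ω → E)} (hX : Stable P X)
    {𝒳 : Set (CondRaw Ω E)} (hsig : IsStableSigma P X 𝒳) {S : CondRaw Ω E} (hS : S ∈ 𝒳)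
    {B : Set Ω} (hB : MeasurableSet B)
    {μ : CondRaw Ω E → Ω → ℝ≥0∞} (hμ : IsStableMeasureOn P X 𝒳 μ) :
    μ (crestrict S B) =ᵐ[P] B.indicator (μ S) := by
  have hc := hsig.1.2.1 S hS
  have hm := botSeq_mem hX hsig hS
  have h1 := hμ.1.2.1 _ (hsig.1.2.2.2 (mkPart P (fun _ => B) (fun _ => hB)) _ hm) _
    (restrict_mem hX hsig hS hB) (restrict_ceq hc hB)
  have h2 := hμ.1.2.2 (mkPart P (fun _ => B) (fun _ => hB)) _ hm
  filter_upwards [h1, h2, measure_cbot (cbot_mem hX hsig) hμ,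
    concat_ae (mkPart P (fun _ => B) (fun _ => hB)) (fun k => μ (botSeq X S k))] with ω a b c d
  rw [← a, b]
  by_cases hω : ω ∈ B
  · obtain ⟨k, hk⟩ := exists_disjointed (C := fun _ : ℕ => B) ⟨0, hω⟩
    rw [d (k + 1) hk, indicator_of_mem hω]
    rfl
  · rw [indicator_of_notMem hω, d 0 (by
      show ω ∈ (⋃ _ : ℕ, B)ᶜ
      simpa using hω)]
    exact c

theorem measure_add [IsProbabilityMeasure P] {X : Set (Ω → E)} (hX : Stable P X)
    {𝒳 : Set (CondRaw Ω E)} (hsig : IsStableSigma P X 𝒳)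
    {μ : CondRaw Ω E → Ω → ℝ≥0∞} (hμ : IsStableMeasureOn P X 𝒳 μ)
    {S : ℕ → CondRaw Ω E} (hS : ∀ k, S k ∈ 𝒳) {I : ℕ → (Ω → E) → Set Ω}
    (hI : ∀ k, Rep P X (S k) (I k))
    (hd : ∀ i j, i ≠ j → ∀ x ∈ X, Disjoint (I i x) (I j x))
    {T : CondRaw Ω E} (hT : T ∈ 𝒳) (hTI : Rep P X T (fun x => ⋃ k, I k x)) :
    μ T =ᵐ[P] fun ω => ∑' k, μ (S k) ω := by
  have hm := hsig.2.2.2 S hS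
  have h1 := hμ.2.2 S hS (fun i j hij => (cdisjoint_iff hX (hI i) (hI j)).mpr fun x hx => by
    filter_upwards with ω h using (Set.disjoint_left.mp (hd i j hij x hx)) h.1 h.2) hm
  exact (hμ.1.2.1 _ hT _ hm (rep_ceq hTI (cSupFam_rep hX hI))).trans h1

theorem measure_compl_add [IsProbabilityMeasure P] {X : Set (Ω → E)} (hX : Stable P X)
    {𝒳 : Set (CondRaw Ω E)} (hsig : IsStableSigma P X 𝒳)
    {μ : CondRaw Ω E → Ω → ℝ≥0∞} (hμ : IsStableMeasureOn P X 𝒳 μ)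
    {S S' : CondRaw Ω E} (hS : S ∈ 𝒳) (hS' : S' ∈ 𝒳) {I : (Ω → E) → Set Ω}
    (hI : Rep P X S I) (hI' : Rep P X S' (fun x => (I x)ᶜ)) :
    ∀ᵐ ω ∂P, μ (ctop X) ω = μ S ω + μ S' ω := by
  have hb := cbot_mem hX hsig
  have key := measure_add hX hsig hμ
    (S := fun n => match n with | 0 => S | 1 => S' | _ + 2 => cbot X)
    (I := fun n => match n with | 0 => I | 1 => (fun x => (I x)ᶜ) | _ + 2 => fun _ => ∅)
    (by rintro (_ | _ | n); exacts [hS, hS', hb])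
    (by rintro (_ | _ | n); exacts [hI, hI', cbot_rep hX])
    (by
      rintro (_ | _ | i) (_ | _ | j) hij x hx
      · exact absurd rfl hij
      · exact disjoint_compl_right
      · exact disjoint_empty _
      · exact disjoint_compl_left
      · exact absurd rfl hij
      · exact disjoint_empty _
      · exact empty_disjoint _
      · exact empty_disjoint _
      · exact empty_disjoint _)
    hsig.2.1
    (by
      convert ctop_rep hX using 2 with x
      rw [eq_univ_iff_forall]
      intro ω
      by_cases h : ω ∈ I x
      · exact mem_iUnion.mpr ⟨0, h⟩
      · exact mem_iUnion.mpr ⟨1, h⟩)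
  filter_upwards [key, measure_cbot hb hμ] with ω h h0
  rw [h, tsum_eq_sum (s := Finset.range 2)]
  · simp [Finset.sum_range_succ]
  · rintro (_ | _ | n) hn
    · simp at hn
    · simp at hn
    · exact h0

/-- Section of a set of pairs. -/
def sec (G : Set ((Ω → E) × Ω)) (x : Ω → E) : Set Ω := {ω | (x, ω) ∈ G}

/-- The genuine σ-algebra of sets of pairs representing elements of `𝒳`. -/
def sigma [IsProbabilityMeasure P] {X : Set (Ω → E)} (hX : Stable P X)
    {𝒳 : Set (CondRaw Ω E)} (hsig : IsStableSigma P X 𝒳) :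
    MeasurableSpace ((Ω → E) × Ω) where
  MeasurableSet' G := ∃ S ∈ 𝒳, Rep P X S (sec G)
  measurableSet_empty := ⟨cbot X, cbot_mem hX hsig, cbot_rep hX⟩
  measurableSet_compl := fun _ ⟨S, hS, h⟩ => ⟨ccompl P X S, hsig.2.2.1 S hS, ccompl_rep hX h⟩
  measurableSet_iUnion := fun G h => by
    choose S hS h using h
    refine ⟨cSupFam P X S, hsig.2.2.2 S hS, ?_⟩
    have e : sec (⋃ i, G i) = fun x => ⋃ i, sec (G i) x := by
      ext x ω
      simp [sec]
    rw [e]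
    exact cSupFam_rep hX h

theorem exists_measure [IsProbabilityMeasure P] {X : Set (Ω → E)} (hX : Stable P X)
    {𝒳 : Set (CondRaw Ω E)} (hsig : IsStableSigma P X 𝒳)
    {μ : CondRaw Ω E → Ω → ℝ≥0∞} (hμ : IsStableMeasureOn P X 𝒳 μ)
    {w : Ω → ℝ≥0∞} (hw : Measurable w) :
    ∃ m : @Measure ((Ω → E) × Ω) (sigma hX hsig), ∀ G S, S ∈ 𝒳 → Rep P X S (sec G) →
      m G = ∫⁻ ω, w ω * μ S ω ∂P := by
  have wd : ∀ {S T : CondRaw Ω E} {I : (Ω → E) → Set Ω}, S ∈ 𝒳 → T ∈ 𝒳 → Rep P X S I →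
      Rep P X T I → ∫⁻ ω, w ω * μ S ω ∂P = ∫⁻ ω, w ω * μ T ω ∂P := by
    intro S T I hS hT hSI hTI
    refine lintegral_congr_ae ?_
    filter_upwards [hμ.1.2.1 S hS T hT (rep_ceq hSI hTI)] with ω h
    rw [h]
  letI := sigma hX hsig
  let m : ∀ G : Set ((Ω → E) × Ω), MeasurableSet G → ℝ≥0∞ := fun G hG =>
    ∫⁻ ω, w ω * μ (Exists.choose hG) ω ∂P
  have hm : ∀ G (hG : MeasurableSet G) S, S ∈ 𝒳 → Rep P X S (sec G) →
      m G hG = ∫⁻ ω, w ω * μ S ω ∂P := by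
    intro G hG S hS h
    exact wd (Exists.choose_spec hG).1 hS (Exists.choose_spec hG).2 h
  refine ⟨Measure.ofMeasurable m ?_ ?_, ?_⟩
  · rw [hm ∅ _ (cbot X) (cbot_mem hX hsig) (cbot_rep hX)]
    rw [← lintegral_zero (μ := P)]
    refine lintegral_congr_ae ?_
    filter_upwards [measure_cbot (cbot_mem hX hsig) hμ] with ω h
    simp [h]
  · intro G hG hdisj
    have hU : MeasurableSet (⋃ i, G i) := MeasurableSet.iUnion hG
    obtain ⟨T, hT, hTG⟩ := hU
    have hG' := hG
    choose S hS hSG using hG'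
    rw [hm _ _ T hT hTG]
    simp_rw [fun i => hm (G i) (hG i) (S i) (hS i) (hSG i)]
    have hmeas : ∀ i, AEMeasurable (fun ω => w ω * μ (S i) ω) P :=
      fun i => (hw.mul (hμ.1.1 _ (hS i))).aemeasurable
    rw [← lintegral_tsum hmeas]
    have e : sec (⋃ i, G i) = fun x => ⋃ i, sec (G i) x := by
      ext x ω
      simp [sec]
    rw [e] at hTG
    have := measure_add hX hsig hμ hS hSG (fun i j hij x _ => by
      rw [Set.disjoint_left]
      intro ω h1 h2
      exact Set.disjoint_left.mp (hdisj hij) h1 h2) hT hTG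
    refine lintegral_congr_ae ?_
    filter_upwards [this] with ω h
    rw [h, ENNReal.tsum_mul_left]
  · intro G S hS h
    have hG : MeasurableSet G := ⟨S, hS, h⟩
    rw [Measure.ofMeasurable_apply G hG]
    exact hm G hG S hS h

/-- Localization: an inequality of the scalar measures on all subsets yields an a.s.
inequality of the stable measures. -/
theorem localize [IsProbabilityMeasure P] {X : Set (Ω → E)} (hX : Stable P X)
    {𝒳 : Set (CondRaw Ω E)} (hsig : IsStableSigma P X 𝒳)
    {μ ν : CondRaw Ω E → Ω → ℝ≥0∞} (hμ : IsStableMeasureOn P X 𝒳 μ)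
    (hν : IsStableMeasureOn P X 𝒳 ν)
    {w : Ω → ℝ≥0∞} (hw : Measurable w) (hw0 : ∀ᵐ ω ∂P, w ω ≠ 0 ∧ w ω ≠ ∞)
    {m n : @Measure ((Ω → E) × Ω) (sigma hX hsig)}
    (hm : ∀ G S, S ∈ 𝒳 → Rep P X S (sec G) → m G = ∫⁻ ω, w ω * μ S ω ∂P)
    (hn : ∀ G S, S ∈ 𝒳 → Rep P X S (sec G) → n G = ∫⁻ ω, w ω * ν S ω ∂P)
    {G : Set ((Ω → E) × Ω)}
    (hG : ∀ t, MeasurableSet[sigma hX hsig] t → t ⊆ G → m t ≤ n t)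
    {S : CondRaw Ω E} (hS : S ∈ 𝒳) (hSG : Rep P X S (sec G)) :
    ∀ᵐ ω ∂P, μ S ω ≤ ν S ω := by
  have key : (fun ω => w ω * μ S ω) ≤ᵐ[P] fun ω => w ω * ν S ω := by
    refine ae_le_of_forall_setLIntegral_le_of_sigmaFinite (hw.mul (hμ.1.1 S hS)) ?_
    intro B hB _
    have hR : Rep P X (crestrict S B) (sec (G ∩ {p | p.2 ∈ B})) := crestrict_rep hSG hB
    have hRm := restrict_mem hX hsig hS hB
    have h1 := hG (G ∩ {p | p.2 ∈ B}) ⟨_, hRm, hR⟩ inter_subset_left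
    rw [hm _ _ hRm hR, hn _ _ hRm hR] at h1
    have e : ∀ {ρ : CondRaw Ω E → Ω → ℝ≥0∞}, IsStableMeasureOn P X 𝒳 ρ →
        ∫⁻ ω, w ω * ρ (crestrict S B) ω ∂P = ∫⁻ ω in B, w ω * ρ S ω ∂P := by
      intro ρ hρ
      rw [← lintegral_indicator hB]
      refine lintegral_congr_ae ?_
      filter_upwards [restrict_measure hX hsig hS hB hρ] with ω h
      rw [h]
      by_cases hω : ω ∈ B <;> simp [hω]
    rwa [e hμ, e hν] at h1
  filter_upwards [key, hw0] with ω h h0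
  exact (ENNReal.mul_le_mul_iff_right h0.1 h0.2).mp h

end Helpers

/-- **Lemma 5.5 (a conditional Hahn-type lemma).**  Let `μ₁, μ₂` be finite stable
measures on a stable measurable space `(X, 𝒳)` and `μ₃ := μ₂ − μ₁` (an `L⁰`-valued
stable set function).  Then there exists `X₀|A₀ ∈ 𝒳` such that
(i) `μ₃(X) ≤ μ₃(X₀|A₀)` and (ii) `0 ≤ μ₃(V|A)` for every `V|A ∈ 𝒳` with
`V|A ⊑ X₀|A₀`. -/
theorem stable_hahn_lemma
    {Ω E : Type*} {mΩ : MeasurableSpace Ω} (P : @Measure Ω mΩ)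
    [IsProbabilityMeasure P] (X : Set (Ω → E)) (hX : Stable P X)
    (𝒳 : Set (CondRaw Ω E)) (hsig : IsStableSigma P X 𝒳)
    (μ₁ μ₂ : CondRaw Ω E → Ω → ℝ≥0∞)
    (hμ₁ : IsFiniteStableMeasureOn P X 𝒳 μ₁)
    (hμ₂ : IsFiniteStableMeasureOn P X 𝒳 μ₂) :
    ∃ S₀ ∈ 𝒳,
      (∀ᵐ ω ∂P,
        (μ₂ (ctop X) ω).toReal - (μ₁ (ctop X) ω).toReal ≤
          (μ₂ S₀ ω).toReal - (μ₁ S₀ ω).toReal) ∧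
      ∀ S ∈ 𝒳, cle P S S₀ →
        ∀ᵐ ω ∂P, 0 ≤ (μ₂ S ω).toReal - (μ₁ S ω).toReal := by
  obtain ⟨h1, f1⟩ := hμ₁
  obtain ⟨h2, f2⟩ := hμ₂
  have ht := hsig.2.1
  let w : Ω → ℝ≥0∞ := fun ω => (1 + μ₁ (ctop X) ω + μ₂ (ctop X) ω)⁻¹
  have hw : Measurable w := ((measurable_const.add (h1.1.1 _ ht)).add (h2.1.1 _ ht)).inv
  have hw0 : ∀ᵐ ω ∂P, w ω ≠ 0 ∧ w ω ≠ ∞ := by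
    filter_upwards [f1, f2] with ω a b
    refine ⟨ENNReal.inv_ne_zero.mpr ?_, ENNReal.inv_ne_top.mpr ?_⟩
    · exact ENNReal.add_ne_top.mpr ⟨ENNReal.add_ne_top.mpr ⟨ENNReal.one_ne_top, a.ne⟩, b.ne⟩
    · exact (lt_of_lt_of_le one_pos (by rw [add_assoc]; exact le_self_add)).ne'
  obtain ⟨m₁, hm₁⟩ := exists_measure hX hsig h1 hw
  obtain ⟨m₂, hm₂⟩ := exists_measure hX hsig h2 hw
  letI := sigma hX hsig
  have fin1 : IsFiniteMeasure m₁ := by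
    refine ⟨?_⟩
    rw [hm₁ univ _ ht (ctop_rep hX)]
    refine lt_of_le_of_lt (lintegral_mono (g := fun _ => 1) fun ω => ?_) (by simp)
    show (1 + μ₁ (ctop X) ω + μ₂ (ctop X) ω)⁻¹ * μ₁ (ctop X) ω ≤ 1
    rw [mul_comm, ← div_eq_mul_inv]
    exact ENNReal.div_le_of_le_mul (by rw [one_mul, add_right_comm]; exact le_add_self)
  have fin2 : IsFiniteMeasure m₂ := by
    refine ⟨?_⟩
    rw [hm₂ univ _ ht (ctop_rep hX)]
    refine lt_of_le_of_lt (lintegral_mono (g := fun _ => 1) fun ω => ?_) (by simp)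
    show (1 + μ₁ (ctop X) ω + μ₂ (ctop X) ω)⁻¹ * μ₂ (ctop X) ω ≤ 1
    rw [mul_comm, ← div_eq_mul_inv]
    exact ENNReal.div_le_of_le_mul (by rw [one_mul]; exact le_add_self)
  obtain ⟨i, hi, hpos, hneg⟩ := hahn_decomposition m₂ m₁
  have hic : MeasurableSet iᶜ := hi.compl
  obtain ⟨S₀, hS₀, hr₀⟩ := hi
  obtain ⟨S₁, hS₁, hr₁⟩ := hic
  -- all values are a.s. finite
  have hfin : ∀ {μ : CondRaw Ω E → Ω → ℝ≥0∞}, IsStableMeasureOn P X 𝒳 μ →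
      (∀ᵐ ω ∂P, μ (ctop X) ω < ∞) → ∀ S ∈ 𝒳, ∀ᵐ ω ∂P, μ S ω ≠ ∞ := by
    intro μ hμ hf S hS
    obtain ⟨I, hI⟩ := exists_rep (hsig.1.2.1 S hS)
    filter_upwards [hf, measure_compl_add hX hsig hμ hS (hsig.2.2.1 S hS) hI
      (ccompl_rep hX hI)] with ω a b
    rw [b] at a
    exact (ENNReal.add_lt_top.mp a).1.ne
  refine ⟨S₀, hS₀, ?_, ?_⟩
  · have hle := localize hX hsig h2 h1 hw hw0 hm₂ hm₁ hneg hS₁ hr₁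
    filter_upwards [hle, measure_compl_add hX hsig h1 hS₀ hS₁ hr₀ hr₁,
      measure_compl_add hX hsig h2 hS₀ hS₁ hr₀ hr₁, hfin h1 f1 S₀ hS₀, hfin h1 f1 S₁ hS₁,
      hfin h2 f2 S₀ hS₀, hfin h2 f2 S₁ hS₁] with ω a b c d e f g
    rw [b, c, ENNReal.toReal_add d e, ENNReal.toReal_add f g]
    have := ENNReal.toReal_mono e a
    linarith
  · intro S hS hle
    obtain ⟨I, hI⟩ := exists_rep (hsig.1.2.1 S hS)
    have hIi := (cle_iff hI hr₀).mp hle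
    have hG : Rep P X S (sec ({p | p.2 ∈ I p.1} ∩ i)) := by
      refine hI.congr (fun x hx => (hI.2 x hx).1.inter (hr₀.2 x hx).1) fun x hx => ?_
      filter_upwards [hIi x hx] with ω a
      exact ⟨fun h => ⟨h, a h⟩, fun h => h.1⟩
    have := localize hX hsig h1 h2 hw hw0 hm₁ hm₂
      (fun t ht hti => hpos t ht (hti.trans inter_subset_right)) hS hG
    filter_upwards [this, hfin h2 f2 S hS] with ω a b
    have := ENNReal.toReal_mono b a
    linarith

end CondMT
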